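/- Let Q be an extended Dynkin quiver with minimal positive imaginary root δ and let λ ∈ K^I satisfy λ·δ = 0. Then Σ_λ consists exactly of δ together with the indecomposable elements of ℕR_λ^+ (an element of ℕR_λ^+ being indecomposable if it is nonzero and cannot be written as a sum of two nonzero elements of ℕR_λ^+), and every element of Σ_λ is ≤ δ componentwise. -/

import Mathlib

open scoped BigOperators

noncomputable section

/-- A quiver with a finite vertex set `I` and a finite arrow set `A`;
`h a` and `t a` are the head and the tail of the arrow `a`. -/
structure FinQuiver where
  I : Type
  [fintypeI : Fintype I]
  [decEqI : DecidableEq I]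
  A : Type
  [fintypeA : Fintype A]
  h : A → I
  t : A → I

attribute [instance] FinQuiver.fintypeI FinQuiver.decEqI FinQuiver.fintypeA

namespace FinQuiver

variable (Q : FinQuiver)

/-- Arrows of the double quiver `Q̄` : every arrow `a : i → j` of `Q` (as `Sum.inl a`)
together with a reverse arrow `a* : j → i` (as `Sum.inr a`). -/
@[reducible] def DA : Type := Q.A ⊕ Q.A

instance : Fintype Q.DA := inferInstanceAs (Fintype (Q.A ⊕ Q.A))

/-- Head of an arrow of the double quiver. -/
@[reducible] def dh : Q.DA → Q.I := fun a => match a with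
  | Sum.inl a => Q.h a
  | Sum.inr a => Q.t a

/-- Tail of an arrow of the double quiver. -/
@[reducible] def dt : Q.DA → Q.I := fun a => match a with
  | Sum.inl a => Q.t a
  | Sum.inr a => Q.h a

/-- The symmetric bilinear form
`(α,β) = ∑_{i∈I} 2 α_i β_i − ∑_{a∈Q̄} α_{h(a)} β_{t(a)}` on `ℤ^I`. -/
def bil (α β : Q.I → ℤ) : ℤ :=
  (∑ i, 2 * α i * β i) - ∑ a : Q.DA, α (Q.dh a) * β (Q.dt a)

/-- `p(α) = 1 − q(α) = 1 − α·α + ∑_{a ∈ Q} α_{t(a)} α_{h(a)}`. -/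
def pp (α : Q.I → ℤ) : ℤ :=
  1 - (∑ i, α i * α i) + ∑ a : Q.A, α (Q.t a) * α (Q.h a)

/-- The coordinate vector `ε_i` at a vertex `i`. -/
def ev (i : Q.I) : Q.I → ℤ := fun j => if j = i then 1 else 0

/-- The coordinate vector of a vertex, as a vector of natural numbers. -/
def evN (i : Q.I) : Q.I → ℕ := fun j => if j = i then 1 else 0

/-- A vertex is loopfree if no arrow has both its head and its tail there. -/
def Loopfree (i : Q.I) : Prop := ∀ a : Q.A, ¬ (Q.h a = i ∧ Q.t a = i)

/-- The reflection `s_i(α) = α − (α,ε_i) ε_i` at a (loopfree) vertex `i`. -/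
def refl (i : Q.I) (α : Q.I → ℤ) : Q.I → ℤ := α - Q.bil α (Q.ev i) • Q.ev i

/-- Two vertices are joined by some arrow. -/
def Adj (i j : Q.I) : Prop :=
  ∃ a : Q.A, (Q.h a = i ∧ Q.t a = j) ∨ (Q.h a = j ∧ Q.t a = i)

/-- The quiver is connected. -/
def Connected : Prop := ∀ i j : Q.I, Relation.ReflTransGen Q.Adj i j

/-- The support of the vector `α` is connected in `Q`. -/
def SuppConnected (α : Q.I → ℤ) : Prop :=
  ∀ i j : Q.I, α i ≠ 0 → α j ≠ 0 →
    Relation.ReflTransGen (fun x y => α x ≠ 0 ∧ α y ≠ 0 ∧ Q.Adj x y) i j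

/-- The fundamental region: nonzero nonnegative vectors with connected support
such that `(α, ε_i) ≤ 0` for every vertex `i`. -/
def InFund (α : Q.I → ℤ) : Prop :=
  α ≠ 0 ∧ (∀ i, 0 ≤ α i) ∧ Q.SuppConnected α ∧ ∀ i, Q.bil α (Q.ev i) ≤ 0

/-- The roots of the Kac root system attached to `Q` : the real roots form the orbit
of the simple roots (coordinate vectors at loopfree vertices) under the reflections at
loopfree vertices, and the imaginary roots form the orbit of `±(fundamental region)`
under these reflections. -/
inductive IsRoot : (Q.I → ℤ) → Prop
  | simple (i : Q.I) (hi : Q.Loopfree i) : IsRoot (Q.ev i)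
  | fund (α : Q.I → ℤ) (hα : Q.InFund α) : IsRoot α
  | neg_fund (α : Q.I → ℤ) (hα : Q.InFund α) : IsRoot (-α)
  | reflect (i : Q.I) (hi : Q.Loopfree i) (α : Q.I → ℤ) (hα : IsRoot α) :
      IsRoot (Q.refl i α)

/-- Positive roots: roots all of whose components are nonnegative. -/
def IsPosRoot (α : Q.I → ℤ) : Prop := Q.IsRoot α ∧ (∀ i, 0 ≤ α i) ∧ α ≠ 0

/-- The Tits form is positive semidefinite. -/
def PosSemidef : Prop := ∀ α : Q.I → ℤ, 0 ≤ Q.bil α α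

/-- The Tits form is positive definite. -/
def PosDef : Prop := Q.PosSemidef ∧ ∀ α : Q.I → ℤ, Q.bil α α = 0 → α = 0

/-- Dynkin quivers: connected, with positive definite Tits form. -/
def IsDynkin : Prop := Q.Connected ∧ Q.PosDef

/-- Extended Dynkin quivers: connected, with positive semidefinite but not
positive definite Tits form. -/
def IsExtDynkin : Prop := Q.Connected ∧ Q.PosSemidef ∧ ¬ Q.PosDef

/-- `δ` is the minimal positive imaginary root of an extended Dynkin quiver:
the minimal nonzero nonnegative vector in the radical of the Tits form. -/
def IsMinImag (δ : Q.I → ℤ) : Prop :=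
  (∀ i, 0 ≤ δ i) ∧ δ ≠ 0 ∧ (∀ i, Q.bil δ (Q.ev i) = 0) ∧
    ∀ β : Q.I → ℤ, (∀ i, 0 ≤ β i) → β ≠ 0 → (∀ i, Q.bil β (Q.ev i) = 0) →
      ∀ i, δ i ≤ β i

/-- The subquiver of `Q` on a subset `S` of vertices and a subset `B` of arrows. -/
def restrict (S : Set Q.I) (B : Set Q.A) (hh : ∀ a ∈ B, Q.h a ∈ S)
    (ht : ∀ a ∈ B, Q.t a ∈ S) : FinQuiver :=
  { I := S
    fintypeI := Fintype.ofFinite S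
    decEqI := Classical.decEq _
    A := B
    fintypeA := Fintype.ofFinite B
    h := fun a => ⟨Q.h a.1, hh a.1 a.2⟩
    t := fun a => ⟨Q.t a.1, ht a.1 a.2⟩ }

/-- The support quiver of a vector: the full subquiver on the support of `β`. -/
def suppQuiver (β : Q.I → ℤ) : FinQuiver :=
  Q.restrict {i | β i ≠ 0} {a | β (Q.h a) ≠ 0 ∧ β (Q.t a) ≠ 0}
    (fun _ ha => ha.1) (fun _ ha => ha.2)

/-- A dimension vector (of natural numbers), viewed in `ℤ^I`. -/
def toZ (α : Q.I → ℕ) : Q.I → ℤ := fun i => (α i : ℤ)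

/-- An oriented cycle in the double quiver `Q̄`, consisting of `n+1` arrows,
the tail of each arrow being the head of the (cyclically) next one. -/
structure Cyc (Q' : FinQuiver) where
  n : ℕ
  ar : Fin (n + 1) → Q'.DA
  compat : ∀ i : Fin (n + 1), Q'.dt (ar i) = Q'.dh (ar (i + 1))

section WithField

variable (K : Type) [Field K]

/-- `λ·α = ∑_i λ_i α_i`. -/
def pair (l : Q.I → K) (α : Q.I → ℤ) : K := ∑ i, l i * (α i : K)

/-- `R_λ^+`, the set of positive roots `α` with `λ·α = 0`. -/
def Rplus (l : Q.I → K) : Set (Q.I → ℤ) :=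
  {α | Q.IsPosRoot α ∧ Q.pair K l α = 0}

/-- `ℕ R_λ^+`, the set of sums (including the empty sum `0`) of elements of `R_λ^+`. -/
def NRplus (l : Q.I → K) : Set (Q.I → ℤ) :=
  (AddSubmonoid.closure (Q.Rplus K l) : AddSubmonoid (Q.I → ℤ))

/-- `Σ_λ` : the elements `α ∈ R_λ^+` with `p(α) > ∑ p(β⁽ᵗ⁾)` for every decomposition
of `α` as a sum of at least two elements `β⁽ᵗ⁾` of `R_λ^+`. -/
def SigmaSet (l : Q.I → K) : Set (Q.I → ℤ) :=
  {α | α ∈ Q.Rplus K l ∧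
    ∀ (n : ℕ) (β : Fin n → (Q.I → ℤ)), 2 ≤ n → (∀ j, β j ∈ Q.Rplus K l) →
      α = ∑ j, β j → (∑ j, Q.pp (β j)) < Q.pp α}

/-- The dual reflection `r_i(λ)_j = λ_j − (ε_i,ε_j) λ_i`. -/
def coRefl (i : Q.I) (l : Q.I → K) : Q.I → K :=
  fun j => l j - (Q.bil (Q.ev i) (Q.ev j) : ℤ) * l i

/-- A single admissible reflection applied to the pair `(λ, α)`:
a reflection at a loopfree vertex `i` with `λ_i ≠ 0`. -/
def AdmStep (x y : (Q.I → K) × (Q.I → ℤ)) : Prop :=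
  ∃ i : Q.I, Q.Loopfree i ∧ x.1 i ≠ 0 ∧ y.1 = Q.coRefl K i x.1 ∧ y.2 = Q.refl i x.2

/-- `(ν,β)` is obtained from `(λ,α)` by a sequence of admissible reflections:
the two pairs lie in the same class of the equivalence relation generated by
admissible reflections. -/
def AdmEquiv (x y : (Q.I → K) × (Q.I → ℤ)) : Prop :=
  Relation.EqvGen (Q.AdmStep K) x y

/-- The space `Rep(Q̄,α)` of representations of the double quiver. -/
def Rep (α : Q.I → ℕ) : Type :=
  ∀ a : Q.DA, Matrix (Fin (α (Q.dh a))) (Fin (α (Q.dt a))) K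

/-- The moment map
`μ_α(x)_i = ∑_{a∈Q, h(a)=i} x_a x_{a*} − ∑_{a∈Q, t(a)=i} x_{a*} x_a`. -/
def moment (α : Q.I → ℕ) (x : Q.Rep K α) (i : Q.I) :
    Matrix (Fin (α i)) (Fin (α i)) K :=
  (∑ a : Q.A, if h : Q.h a = i then
      (x (Sum.inl a) * x (Sum.inr a)).submatrix
        (Fin.cast (congrArg α h).symm) (Fin.cast (congrArg α h).symm)
    else 0)
  - ∑ a : Q.A, if h : Q.t a = i then
      (x (Sum.inr a) * x (Sum.inl a)).submatrix
        (Fin.cast (congrArg α h).symm) (Fin.cast (congrArg α h).symm)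
    else 0

/-- The fibre `μ_α^{-1}(λ)` of the moment map over (the central element
corresponding to) `λ`. -/
def MomentFiber (l : Q.I → K) (α : Q.I → ℕ) : Set (Q.Rep K α) :=
  {x | ∀ i : Q.I, Q.moment K α x i = l i • (1 : Matrix (Fin (α i)) (Fin (α i)) K)}

/-- The group `∏_i GL(α_i,K)`; it acts on `Rep(Q̄,α)` by conjugation, with the same
orbits and the same invariant functions as `G(α) = (∏_i GL(α_i,K))/K^*`. -/
def Gl (α : Q.I → ℕ) : Type := ∀ i : Q.I, Matrix.GeneralLinearGroup (Fin (α i)) K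

/-- The conjugation action of `∏_i GL(α_i,K)` on `Rep(Q̄,α)`. -/
def glAct (α : Q.I → ℕ) (g : Q.Gl K α) (x : Q.Rep K α) : Q.Rep K α :=
  fun a => (g (Q.dh a) : Matrix (Fin (α (Q.dh a))) (Fin (α (Q.dh a))) K) * x a *
    (((g (Q.dt a))⁻¹ : Matrix.GeneralLinearGroup (Fin (α (Q.dt a))) K) :
      Matrix (Fin (α (Q.dt a))) (Fin (α (Q.dt a))) K)

/-- Coordinates on `Rep(Q̄,α)`: matrix entries. -/
def Coords (α : Q.I → ℕ) : Type :=
  Σ a : Q.DA, Fin (α (Q.dh a)) × Fin (α (Q.dt a))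

/-- The coordinate ring `K[V]` of a subset `V` of `Rep(Q̄,α)` : the algebra of
`K`-valued functions on `V` which are restrictions of polynomial functions. -/
def fnRing (α : Q.I → ℕ) (V : Set (Q.Rep K α)) : Subalgebra K (↥V → K) :=
  (MvPolynomial.aeval
    (fun c : Q.Coords α => fun v : ↥V => v.1 c.1 c.2.1 c.2.2) :
    MvPolynomial (Q.Coords α) K →ₐ[K] (↥V → K)).range

end WithField

end FinQuiver

/-- The subalgebra of functions invariant under a relation (e.g. the orbit
relation of a group action). -/
def relInv (K : Type) [Field K] {V : Type} (R : V → V → Prop) :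
    Subalgebra K (V → K) where
  carrier := {f | ∀ x y : V, R x y → f x = f y}
  mul_mem' := by
    intro f g hf hg x y hxy
    simp only [Pi.mul_apply, hf x y hxy, hg x y hxy]
  one_mem' := fun x y _ => rfl
  add_mem' := by
    intro f g hf hg x y hxy
    simp only [Pi.add_apply, hf x y hxy, hg x y hxy]
  zero_mem' := fun x y _ => rfl
  algebraMap_mem' := fun c x y _ => rfl

namespace FinQuiver

variable (Q : FinQuiver) (K : Type) [Field K]

/-- The coordinate ring of the Marsden–Weinstein reduction
`N(λ,α) = μ_α^{-1}(λ) ⫽ G(α)` : the `G(α)`-invariant functions in the coordinate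
ring of `μ_α^{-1}(λ)`.  Two such reductions are isomorphic as (affine) varieties
exactly when these `K`-algebras are isomorphic. -/
def InvRing (l : Q.I → K) (α : Q.I → ℕ) :
    Subalgebra K (↥(Q.MomentFiber K l α) → K) :=
  Q.fnRing K α (Q.MomentFiber K l α) ⊓
    relInv K (fun x y : ↥(Q.MomentFiber K l α) =>
      ∃ g : Q.Gl K α, y.1 = Q.glAct K α g x.1)

/-- Index type for a product `∏_t X_t^{m_t}`. -/
@[reducible] def SymIdx (s : ℕ) (m : Fin s → ℕ) : Type := Σ t : Fin s, Fin (m t)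

/-- The product `∏_{t} Rep(Q̄, d_t)^{m_t}` of representation spaces. -/
def SymRep (s : ℕ) (m : Fin s → ℕ) (d : Fin s → (Q.I → ℕ)) : Type :=
  ∀ p : SymIdx s m, Q.Rep K (d p.1)

/-- The product `∏_t μ_{d_t}^{-1}(λ)^{m_t}` of moment map fibres. -/
def SymFiber (s : ℕ) (m : Fin s → ℕ) (d : Fin s → (Q.I → ℕ)) (l : Q.I → K) :
    Set (Q.SymRep K s m d) :=
  {x | ∀ p : SymIdx s m, x p ∈ Q.MomentFiber K l (d p.1)}

/-- Polynomial functions on the product of fibres. -/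
def symFnRing (s : ℕ) (m : Fin s → ℕ) (d : Fin s → (Q.I → ℕ)) (l : Q.I → K) :
    Subalgebra K (↥(Q.SymFiber K s m d l) → K) :=
  (MvPolynomial.aeval
    (fun c : Σ p : SymIdx s m, Q.Coords (d p.1) =>
      fun v : ↥(Q.SymFiber K s m d l) => v.1 c.1 c.2.1 c.2.2.1 c.2.2.2) :
    MvPolynomial (Σ p : SymIdx s m, Q.Coords (d p.1)) K →ₐ[K]
      (↥(Q.SymFiber K s m d l) → K)).range

/-- The componentwise action of the product of the groups `∏ GL(d_t)^{m_t}`. -/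
def symGlAct (s : ℕ) (m : Fin s → ℕ) (d : Fin s → (Q.I → ℕ))
    (g : ∀ p : SymIdx s m, Q.Gl K (d p.1)) (x : Q.SymRep K s m d) :
    Q.SymRep K s m d :=
  fun p => Q.glAct K (d p.1) (g p) (x p)

/-- The action of `∏_t S_{m_t}` permuting the factors of each `X_t^{m_t}`. -/
def symPermAct (s : ℕ) (m : Fin s → ℕ) (d : Fin s → (Q.I → ℕ))
    (π : ∀ t : Fin s, Equiv.Perm (Fin (m t))) (x : Q.SymRep K s m d) :
    Q.SymRep K s m d :=
  fun p => x ⟨p.1, π p.1 p.2⟩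

/-- The coordinate ring of the product of symmetric products
`∏_t S^{m_t} N(λ, d_t)` of Marsden–Weinstein reductions: functions on
`∏_t μ_{d_t}^{-1}(λ)^{m_t}` which are polynomial, invariant under all the groups
`G(d_t)` acting on the separate factors, and symmetric under permutations of the
`m_t` factors of each type `t`. -/
def SymInvRing (s : ℕ) (m : Fin s → ℕ) (d : Fin s → (Q.I → ℕ)) (l : Q.I → K) :
    Subalgebra K (↥(Q.SymFiber K s m d l) → K) :=
  Q.symFnRing K s m d l ⊓
    relInv K (fun x y : ↥(Q.SymFiber K s m d l) =>
      ∃ g : ∀ p : SymIdx s m, Q.Gl K (d p.1), y.1 = Q.symGlAct K s m d g x.1) ⊓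
    relInv K (fun x y : ↥(Q.SymFiber K s m d l) =>
      ∃ π : ∀ t : Fin s, Equiv.Perm (Fin (m t)), y.1 = Q.symPermAct K s m d π x.1)

/-- The trace function `tr_p` of an oriented cycle `p` in `Q̄` :
`tr_p(x) = tr(x_{a_1} ⋯ x_{a_ℓ})`, written out via matrix entries. -/
def cycTr (α : Q.I → ℕ) (p : Q.Cyc) (x : Q.Rep K α) : K :=
  ∑ c : ∀ i : Fin (p.n + 1), Fin (α (Q.dh (p.ar i))),
    ∏ i : Fin (p.n + 1),
      x (p.ar i) (c i) (Fin.cast (congrArg α (p.compat i)).symm (c (i + 1)))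

/-- `U` is a subrepresentation of the `Π^λ`-module given by the point
`x ∈ Rep(Q̄,α)` : a collection of subspaces stable under all the maps `x_a`. -/
def SubRep (α : Q.I → ℕ) (x : Q.Rep K α)
    (U : ∀ i : Q.I, Submodule K (Fin (α i) → K)) : Prop :=
  ∀ a : Q.DA, ∀ v ∈ U (Q.dt a), (x a).mulVec v ∈ U (Q.dh a)

/-- The module given by `x` has the simple module `S_{i₀}` (dimension vector
`ε_{i₀}`, all arrows acting as zero) as a composition factor: it has a subquotient
of dimension vector `ε_{i₀}` on which all arrows act as zero. -/
def HasSFactor (α : Q.I → ℕ) (i0 : Q.I) (x : Q.Rep K α) : Prop :=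
  ∃ U W : ∀ i : Q.I, Submodule K (Fin (α i) → K),
    Q.SubRep K α x U ∧ Q.SubRep K α x W ∧ (∀ i, U i ≤ W i) ∧
    (∀ i, Module.finrank K (W i) =
      Module.finrank K (U i) + (if i = i0 then 1 else 0)) ∧
    (∀ a : Q.DA, Q.dh a = i0 → Q.dt a = i0 →
      ∀ v ∈ W (Q.dt a), (x a).mulVec v ∈ U (Q.dh a))

/-- `W/U` is a simple subquotient of the module given by `x`; the simple
subquotients of a module are, up to isomorphism, exactly its composition factors. -/
def SimpleSubquot (α : Q.I → ℕ) (x : Q.Rep K α)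
    (U W : ∀ i : Q.I, Submodule K (Fin (α i) → K)) : Prop :=
  Q.SubRep K α x U ∧ Q.SubRep K α x W ∧ (∀ i, U i ≤ W i) ∧ U ≠ W ∧
    ∀ V : ∀ i : Q.I, Submodule K (Fin (α i) → K),
      Q.SubRep K α x V → (∀ i, U i ≤ V i) → (∀ i, V i ≤ W i) → V = U ∨ V = W

/-- The direct sum map `∏_{j=1}^m Rep(Q̄,δ) → Rep(Q̄,mδ)` (block diagonal). -/
def dsMap (δ : Q.I → ℕ) (m : ℕ) (y : Fin m → Q.Rep K δ) :
    Q.Rep K (fun i => m * δ i) :=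
  fun a => Matrix.of fun r c =>
    if (finProdFinEquiv.symm r).1 = (finProdFinEquiv.symm c).1 then
      y (finProdFinEquiv.symm r).1 a (finProdFinEquiv.symm r).2
        (finProdFinEquiv.symm c).2
    else 0

end FinQuiver


namespace FinQuiver

section Aux

variable (Q : FinQuiver)

lemma bil_eq (α β : Q.I → ℤ) : Q.bil α β = (∑ i, 2 * α i * β i)
    - ∑ a : Q.A, (α (Q.h a) * β (Q.t a) + α (Q.t a) * β (Q.h a)) := by
  unfold bil
  rw [Finset.sum_add_distrib]
  congr 1
  exact Fintype.sum_sum_type _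

lemma bil_symm (α β : Q.I → ℤ) : Q.bil α β = Q.bil β α := by
  rw [bil_eq, bil_eq]
  congr 1
  · exact Finset.sum_congr rfl fun i _ => by ring
  · exact Finset.sum_congr rfl fun i _ => by ring

lemma bil_add_left (α β γ : Q.I → ℤ) : Q.bil (α + β) γ = Q.bil α γ + Q.bil β γ := by
  simp only [bil_eq, Pi.add_apply, mul_add, add_mul, Finset.sum_add_distrib]
  ring

lemma bil_smul_left (c : ℤ) (α γ : Q.I → ℤ) : Q.bil (c • α) γ = c * Q.bil α γ := by
  simp only [bil_eq, Pi.smul_apply, smul_eq_mul, mul_sub, Finset.mul_sum]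
  congr 1
  · exact Finset.sum_congr rfl fun i _ => by ring
  · exact Finset.sum_congr rfl fun i _ => by ring

lemma bil_add_right (α β γ : Q.I → ℤ) : Q.bil γ (α + β) = Q.bil γ α + Q.bil γ β := by
  rw [bil_symm, bil_add_left, bil_symm Q α, bil_symm Q β]

lemma bil_smul_right (c : ℤ) (α γ : Q.I → ℤ) : Q.bil γ (c • α) = c * Q.bil γ α := by
  rw [bil_symm, bil_smul_left, bil_symm]

lemma bil_neg_left (α γ : Q.I → ℤ) : Q.bil (-α) γ = - Q.bil α γ := by
  have := bil_smul_left Q (-1) α γ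
  simpa using this

lemma bil_neg_right (α γ : Q.I → ℤ) : Q.bil γ (-α) = - Q.bil γ α := by
  rw [bil_symm, bil_neg_left, bil_symm]

lemma bil_sub_left (α β γ : Q.I → ℤ) : Q.bil (α - β) γ = Q.bil α γ - Q.bil β γ := by
  rw [sub_eq_add_neg, bil_add_left, bil_neg_left]; ring

lemma bil_sub_right (α β γ : Q.I → ℤ) : Q.bil γ (α - β) = Q.bil γ α - Q.bil γ β := by
  rw [sub_eq_add_neg, bil_add_right, bil_neg_right]; ring

lemma eq_sum_ev (β : Q.I → ℤ) : β = ∑ i, β i • Q.ev i := by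
  funext j
  simp [ev, Finset.sum_apply]

lemma bil_expand (α β : Q.I → ℤ) : Q.bil α β = ∑ i, β i * Q.bil α (Q.ev i) := by
  have key : ∀ s : Finset Q.I, Q.bil α (∑ i ∈ s, β i • Q.ev i)
      = ∑ i ∈ s, β i * Q.bil α (Q.ev i) := by
    intro s
    induction s using Finset.induction_on with
    | empty => simp [bil_eq]
    | insert a s ha ih =>
      rw [Finset.sum_insert ha, Finset.sum_insert ha, bil_add_right, bil_smul_right, ih]
  rw [← key, ← eq_sum_ev]

lemma two_pp (α : Q.I → ℤ) : Q.bil α α = 2 - 2 * Q.pp α := by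
  have h1 : (∑ i, 2 * α i * α i) = 2 * ∑ i, α i * α i := by
    rw [Finset.mul_sum]; exact Finset.sum_congr rfl fun i _ => by ring
  have h2 : (∑ a : Q.A, (α (Q.h a) * α (Q.t a) + α (Q.t a) * α (Q.h a)))
      = 2 * ∑ a : Q.A, α (Q.t a) * α (Q.h a) := by
    rw [Finset.mul_sum]; exact Finset.sum_congr rfl fun i _ => by ring
  rw [bil_eq, h1, h2]; unfold pp; ring

lemma bil_radical (h : Q.PosSemidef) (α : Q.I → ℤ) (hα : Q.bil α α = 0) (β : Q.I → ℤ) :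
    Q.bil α β = 0 := by
  by_contra hne
  have hb := h β
  have h1 := h (β + (-(Q.bil β β + 1) * Q.bil α β) • α)
  simp only [bil_add_left, bil_add_right, bil_smul_left, bil_smul_right, hα,
    bil_symm Q β α] at h1
  have h2 : 1 ≤ Q.bil α β * Q.bil α β := by
    have : 0 < Q.bil α β * Q.bil α β := mul_self_pos.mpr hne
    omega
  nlinarith

lemma bil_loopfree (i : Q.I) (hi : Q.Loopfree i) : Q.bil (Q.ev i) (Q.ev i) = 2 := by
  rw [bil_eq]
  have h1 : (∑ j, 2 * Q.ev i j * Q.ev i j) = 2 := by simp [ev]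
  have h2 : (∑ a : Q.A, (Q.ev i (Q.h a) * Q.ev i (Q.t a) + Q.ev i (Q.t a) * Q.ev i (Q.h a)))
      = 0 := by
    apply Finset.sum_eq_zero
    intro a _
    have := hi a
    simp only [ev]
    split_ifs <;> simp_all
  rw [h1, h2]; norm_num

lemma bil_disjoint (α β : Q.I → ℤ) (ha : ∀ i, 0 ≤ α i) (hb : ∀ i, 0 ≤ β i)
    (hd : ∀ i, α i * β i = 0) : Q.bil α β ≤ 0 := by
  rw [bil_eq]
  have h1 : (∑ j, 2 * α j * β j) = 0 := by
    apply Finset.sum_eq_zero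
    intro j _
    rw [mul_assoc, hd j, mul_zero]
  have h2 : 0 ≤ ∑ a : Q.A, (α (Q.h a) * β (Q.t a) + α (Q.t a) * β (Q.h a)) :=
    Finset.sum_nonneg fun a _ =>
      add_nonneg (mul_nonneg (ha _) (hb _)) (mul_nonneg (ha _) (hb _))
  linarith

lemma bil_not_loopfree (i : Q.I) (hi : ¬ Q.Loopfree i) : Q.bil (Q.ev i) (Q.ev i) ≤ 0 := by
  unfold Loopfree at hi
  push Not at hi
  obtain ⟨a, h1, h2⟩ := hi
  rw [bil_eq]
  have h3 : (∑ j, 2 * Q.ev i j * Q.ev i j) = 2 := by simp [ev]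
  have hn : ∀ j, 0 ≤ Q.ev i j := by intro j; simp only [ev]; split_ifs <;> norm_num
  have h4 := Finset.single_le_sum (s := Finset.univ)
    (f := fun a : Q.A => Q.ev i (Q.h a) * Q.ev i (Q.t a) + Q.ev i (Q.t a) * Q.ev i (Q.h a))
    (fun a _ => add_nonneg (mul_nonneg (hn _) (hn _)) (mul_nonneg (hn _) (hn _)))
    (Finset.mem_univ a)
  have h5 : Q.ev i (Q.h a) * Q.ev i (Q.t a) + Q.ev i (Q.t a) * Q.ev i (Q.h a) = 2 := by
    simp [ev, h1, h2]
  simp only [h5] at h4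
  rw [h3]; linarith

lemma bil_refl (i : Q.I) (hi : Q.Loopfree i) (α : Q.I → ℤ) :
    Q.bil (Q.refl i α) (Q.refl i α) = Q.bil α α := by
  unfold refl
  simp only [bil_sub_left, bil_sub_right, bil_smul_left, bil_smul_right,
    bil_loopfree Q i hi, bil_symm Q (Q.ev i) α]
  ring

lemma refl_refl (i : Q.I) (hi : Q.Loopfree i) (α : Q.I → ℤ) :
    Q.refl i (Q.refl i α) = α := by
  unfold refl
  rw [bil_sub_left, bil_smul_left, bil_loopfree Q i hi]
  funext j
  simp only [Pi.sub_apply, Pi.smul_apply, smul_eq_mul]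
  ring

/-- A nonnegative nonzero radical vector has full support. -/
lemma rad_full (hc : Q.Connected) (β : Q.I → ℤ) (hβ : ∀ i, 0 ≤ β i) (h0 : β ≠ 0)
    (hr : ∀ i, Q.bil β (Q.ev i) = 0) (i : Q.I) : 0 < β i := by
  have step : ∀ i j, Q.Adj i j → β i = 0 → β j = 0 := by
    intro i j hadj hi
    have hn : ∀ j, 0 ≤ Q.ev i j := by intro j; simp only [ev]; split_ifs <;> norm_num
    have h1 := hr i
    rw [bil_eq] at h1
    have h2 : (∑ j, 2 * β j * Q.ev i j) = 0 := by simp [ev, hi]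
    have hnn : ∀ a ∈ (Finset.univ : Finset Q.A),
        0 ≤ β (Q.h a) * Q.ev i (Q.t a) + β (Q.t a) * Q.ev i (Q.h a) := fun a _ =>
      add_nonneg (mul_nonneg (hβ _) (hn _)) (mul_nonneg (hβ _) (hn _))
    have h3 := (Finset.sum_eq_zero_iff_of_nonneg hnn).1 (by linarith)
    obtain ⟨a, ⟨ha, hb⟩ | ⟨ha, hb⟩⟩ := hadj
    · have h4 := h3 a (Finset.mem_univ a)
      have h5 := mul_nonneg (hβ (Q.h a)) (hn (Q.t a))
      simp only [ha, hb, hi] at h4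
      have : Q.ev i i = 1 := by simp [ev]
      rw [this] at h4
      simpa using h4
    · have h4 := h3 a (Finset.mem_univ a)
      simp only [ha, hb, hi] at h4
      have : Q.ev i i = 1 := by simp [ev]
      rw [this] at h4
      simpa using h4
  by_contra hneg
  have hi : β i = 0 := le_antisymm (not_lt.mp hneg) (hβ i)
  apply h0
  funext j
  have hij := hc i j
  induction hij with
  | refl => exact hi
  | tail _ hbc ih => exact step _ _ hbc ih

lemma rad_fund (hc : Q.Connected) (β : Q.I → ℤ) (hβ : ∀ i, 0 ≤ β i) (h0 : β ≠ 0)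
    (hr : ∀ i, Q.bil β (Q.ev i) = 0) : Q.InFund β := by
  have hf := rad_full Q hc β hβ h0 hr
  refine ⟨h0, hβ, ?_, fun i => (hr i).le⟩
  intro i j _ _
  exact Relation.ReflTransGen.mono (fun x y hxy => ⟨(hf x).ne', (hf y).ne', hxy⟩) _ _ (hc i j)

lemma root_pp (hp : Q.PosSemidef) (α : Q.I → ℤ) (h : Q.IsRoot α) :
    Q.pp α = 0 ∨ Q.pp α = 1 := by
  have key : Q.bil α α = 2 ∨ Q.bil α α = 0 := by
    have hfund : ∀ β, Q.InFund β → Q.bil β β = 0 := by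
      intro β hβ
      apply le_antisymm _ (hp β)
      rw [bil_expand]
      exact Finset.sum_nonpos fun i _ =>
        mul_nonpos_of_nonneg_of_nonpos (hβ.2.1 i) (hβ.2.2.2 i)
    induction h with
    | simple i hi => exact Or.inl (bil_loopfree Q i hi)
    | fund β hβ => exact Or.inr (hfund β hβ)
    | neg_fund β hβ =>
      right
      rw [bil_neg_left, bil_neg_right, hfund β hβ]; norm_num
    | reflect i hi β _ ih => rw [bil_refl Q i hi]; exact ih
  have := two_pp Q α
  omega

lemma sign_coh (hc : Q.Connected) (hp : Q.PosSemidef) (α : Q.I → ℤ) (h : Q.bil α α = 2) :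
    (∀ i, 0 ≤ α i) ∨ (∀ i, α i ≤ 0) := by
  set P : Q.I → ℤ := fun i => max (α i) 0 with hP
  set N : Q.I → ℤ := fun i => max (-α i) 0 with hN
  have hPn : ∀ i, 0 ≤ P i := fun i => le_max_right _ _
  have hNn : ∀ i, 0 ≤ N i := fun i => le_max_right _ _
  have hd : ∀ i, P i * N i = 0 := by
    intro i
    rcases le_total 0 (α i) with h | h
    · have : N i = 0 := max_eq_right (by linarith)
      rw [this, mul_zero]
    · have : P i = 0 := max_eq_right h
      rw [this, zero_mul]
  have hPN : α = P - N := by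
    funext i
    simp only [hP, hN, Pi.sub_apply]
    omega
  have hPpos : ∀ i, N i = 0 → 0 ≤ α i := by
    intro i hi; simp only [hN] at hi; omega
  have hNpos : ∀ i, P i = 0 → α i ≤ 0 := by
    intro i hi; simp only [hP] at hi; omega
  have h1 := bil_disjoint Q P N hPn hNn hd
  have h2 : Q.bil P P + Q.bil N N - 2 * Q.bil P N = 2 := by
    have h' := h
    rw [hPN] at h'
    simp only [bil_sub_left, bil_sub_right, bil_symm Q N P] at h'
    linarith
  have h3 := hp P
  have h4 := hp N
  have h5 := two_pp Q P
  have h6 := two_pp Q N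
  have h7 : Q.bil P P = 0 ∨ Q.bil N N = 0 := by omega
  rcases h7 with h7 | h7
  · by_cases hz : P = 0
    · exact Or.inr fun i => hNpos i (congrFun hz i)
    · left
      intro i
      have := rad_full Q hc P hPn hz (fun j => bil_radical Q hp P h7 _) i
      simp only [hP] at this; omega
  · by_cases hz : N = 0
    · exact Or.inl fun i => hPpos i (congrFun hz i)
    · right
      intro i
      have := rad_full Q hc N hNn hz (fun j => bil_radical Q hp N h7 _) i
      simp only [hN] at this; omega

lemma real_root (hc : Q.Connected) (hp : Q.PosSemidef) : ∀ (n : ℕ) (α : Q.I → ℤ),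
    (∑ i, α i) ≤ n → (∀ i, 0 ≤ α i) → Q.bil α α = 2 → Q.IsRoot α := by
  intro n
  induction n with
  | zero =>
    intro α hs hn h
    exfalso
    have h1 := (Finset.sum_eq_zero_iff_of_nonneg (s := Finset.univ) (fun i _ => hn i)).1
      (le_antisymm (by simpa using hs) (Finset.sum_nonneg fun i _ => hn i))
    have : α = 0 := funext fun i => h1 i (Finset.mem_univ i)
    rw [this] at h
    simp [bil_eq] at h
  | succ n ih =>
    intro α hs hn h
    have h1 : 0 < ∑ i, α i * Q.bil α (Q.ev i) := by rw [← bil_expand, h]; norm_num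
    obtain ⟨i, _, hi⟩ := Finset.exists_lt_of_sum_lt
      (s := Finset.univ) (f := fun _ : Q.I => (0 : ℤ)) (by simpa using h1)
    have hb : 0 < Q.bil α (Q.ev i) := by
      by_contra hcon
      have := mul_nonpos_of_nonneg_of_nonpos (hn i) (not_lt.mp hcon)
      linarith
    have hlf : Q.Loopfree i := by
      by_contra hcon
      have h2 := le_antisymm (bil_not_loopfree Q i hcon) (hp _)
      have h3 := bil_radical Q hp _ h2 α
      rw [bil_symm] at h3
      omega
    by_cases hα : α = α i • Q.ev i
    · have h2 : Q.bil α α = α i * (α i * 2) := by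
        conv_lhs => rw [hα]
        rw [bil_smul_left, bil_smul_right, bil_loopfree Q i hlf]
      have h3 : α i = 1 := by
        have := hn i
        nlinarith
      rw [hα, h3, one_smul]
      exact IsRoot.simple i hlf
    · have hr := bil_refl Q i hlf α
      rw [h] at hr
      have hev : ∀ j, j ≠ i → Q.ev i j = 0 := by intro j hj; simp [ev, hj]
      have hne : ¬ ∀ j, Q.refl i α j ≤ 0 := by
        intro hcon
        apply hα
        funext j
        by_cases hj : j = i
        · subst hj; simp [ev]
        · have h2 := hcon j
          have h3 := hn j
          simp only [refl, Pi.sub_apply, Pi.smul_apply, smul_eq_mul, hev j hj] at h2 ⊢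
          omega
      have hpos := (sign_coh Q hc hp _ hr).resolve_right hne
      have hsum : ∑ j, Q.refl i α j = (∑ j, α j) - Q.bil α (Q.ev i) := by
        simp only [refl, Pi.sub_apply, Pi.smul_apply, smul_eq_mul, Finset.sum_sub_distrib,
          ← Finset.mul_sum]
        simp [ev]
      have hroot := ih (Q.refl i α) (by rw [hsum]; push_cast at hs; omega) hpos hr
      rw [← refl_refl Q i hlf α]
      exact IsRoot.reflect i hlf _ hroot

lemma pair_add (K : Type) [Field K] (l : Q.I → K) (α β : Q.I → ℤ) :
    Q.pair K l (α + β) = Q.pair K l α + Q.pair K l β := by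
  simp [pair, mul_add, Finset.sum_add_distrib]

lemma pair_sub (K : Type) [Field K] (l : Q.I → K) (α β : Q.I → ℤ) :
    Q.pair K l (α - β) = Q.pair K l α - Q.pair K l β := by
  simp [pair, mul_sub, Finset.sum_sub_distrib]

lemma NR_list (K : Type) [Field K] (l : Q.I → K) (α : Q.I → ℤ) (h : α ∈ Q.NRplus K l)
    (h0 : α ≠ 0) : ∃ L : List (Q.I → ℤ), 1 ≤ L.length ∧ (∀ β ∈ L, β ∈ Q.Rplus K l) ∧
      L.sum = α := by
  obtain ⟨L, hL, hs⟩ := AddSubmonoid.exists_list_of_mem_closure h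
  refine ⟨L, ?_, hL, hs⟩
  rcases L with _ | ⟨a, L⟩
  · exact absurd hs.symm h0
  · simp

lemma sum_ne_zero (K : Type) [Field K] (l : Q.I → K) (a : Q.I → ℤ) (L : List (Q.I → ℤ))
    (ha : a ∈ Q.Rplus K l) (hL : ∀ β ∈ L, β ∈ Q.Rplus K l) : (a :: L).sum ≠ 0 := by
  have hn : ∀ i, 0 ≤ L.sum i := by
    induction L with
    | nil => intro i; simp
    | cons b L ih =>
      intro i
      rw [List.sum_cons, Pi.add_apply]
      exact add_nonneg ((hL b (by simp)).1.2.1 i)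
        (ih (fun β hβ => hL β (List.mem_cons_of_mem _ hβ)) i)
  intro h
  apply ha.1.2.2
  funext i
  have h1 := congrFun h i
  rw [List.sum_cons, Pi.add_apply] at h1
  have h2 := ha.1.2.1 i
  have h3 := hn i
  simp only [Pi.zero_apply] at h1 ⊢
  omega

end Aux

end FinQuiver

/-- for an extended Dynkin quiver with minimal positive imaginary
root `δ` and `λ·δ = 0`, the set `Σ_λ` consists of `δ` together with the
indecomposable elements of `ℕR_λ^+`, and all its elements are `≤ δ`. -/
theorem stmt11 (Q : FinQuiver) (K : Type) [Field K] [CharZero K] [IsAlgClosed K]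
    (l : Q.I → K) (δ : Q.I → ℤ)
    (hQ : Q.IsExtDynkin) (hδ : Q.IsMinImag δ) (hl : Q.pair K l δ = 0) :
    Q.SigmaSet K l = {δ} ∪
      {α | α ∈ Q.NRplus K l ∧ α ≠ 0 ∧
        ¬ ∃ β γ : Q.I → ℤ, β ∈ Q.NRplus K l ∧ γ ∈ Q.NRplus K l ∧
          β ≠ 0 ∧ γ ≠ 0 ∧ α = β + γ} ∧
    ∀ α ∈ Q.SigmaSet K l, ∀ i, α i ≤ δ i := by
  classical
  obtain ⟨hc, hp, -⟩ := hQ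
  obtain ⟨hδn, hδ0, hδr, hδm⟩ := hδ
  have hδδ : Q.bil δ δ = 0 := by
    rw [FinQuiver.bil_expand]
    exact Finset.sum_eq_zero fun i _ => by rw [hδr i, mul_zero]
  have hppδ : Q.pp δ = 1 := by have := Q.two_pp δ; omega
  have hradR : ∀ β : Q.I → ℤ, (∀ i, 0 ≤ β i) → β ≠ 0 → Q.bil β β = 0 →
      Q.pair K l β = 0 → β ∈ Q.Rplus K l := fun β h1 h2 h3 h4 =>
    ⟨⟨FinQuiver.IsRoot.fund β
      (Q.rad_fund hc β h1 h2 fun i => Q.bil_radical hp β h3 _), h1, h2⟩, h4⟩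
  have hδR : δ ∈ Q.Rplus K l := hradR δ hδn hδ0 hδδ hl
  -- an element with `p = 1` dominates `δ`
  have hge : ∀ β ∈ Q.Rplus K l, Q.pp β = 1 → ∀ i, δ i ≤ β i := by
    intro β hβ h1
    have h2 : Q.bil β β = 0 := by have := Q.two_pp β; omega
    exact hδm β hβ.1.2.1 hβ.1.2.2 fun i => Q.bil_radical hp β h2 _
  have htwo : ∀ α ∈ Q.SigmaSet K l, ∀ β γ, β ∈ Q.Rplus K l → γ ∈ Q.Rplus K l →
      α = β + γ → Q.pp β + Q.pp γ < Q.pp α := by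
    intro α hα β γ hβ hγ h
    have := hα.2 2 ![β, γ] le_rfl (by intro j; fin_cases j <;> simpa) (by simpa using h)
    simpa using this
  have himag : ∀ α ∈ Q.SigmaSet K l, Q.pp α = 1 → α = δ := by
    intro α hα h1
    by_contra hne
    have h2 : Q.bil α α = 0 := by have := Q.two_pp α; omega
    have hr : Q.bil (α - δ) (α - δ) = 0 := by
      rw [FinQuiver.bil_sub_left, Q.bil_radical hp α h2, Q.bil_radical hp δ hδδ]; norm_num
    have h3 : α - δ ∈ Q.Rplus K l := by
      refine hradR _ (fun i => sub_nonneg.mpr (hge α hα.1 h1 i)) (sub_ne_zero.mpr hne) hr ?_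
      rw [Q.pair_sub, hα.1.2, hl, sub_zero]
    have h4 := htwo α hα δ (α - δ) hδR h3 (by abel)
    have h5 := Q.two_pp (α - δ)
    omega
  refine ⟨Set.Subset.antisymm ?_ ?_, ?_⟩
  · intro α hα
    rcases Q.root_pp hp α hα.1.1.1 with h0 | h1
    · right
      refine ⟨AddSubmonoid.subset_closure hα.1, hα.1.1.2.2, ?_⟩
      rintro ⟨β, γ, hβ, hγ, hβ0, hγ0, rfl⟩
      obtain ⟨L, hL1, hL2, hL3⟩ := Q.NR_list K l β hβ hβ0
      obtain ⟨M, hM1, hM2, hM3⟩ := Q.NR_list K l γ hγ hγ0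
      have hmem : ∀ x ∈ L ++ M, x ∈ Q.Rplus K l := by
        intro x hx
        rcases List.mem_append.1 hx with h | h
        · exact hL2 x h
        · exact hM2 x h
      have h2 := hα.2 (L ++ M).length (L ++ M).get (by rw [List.length_append]; omega)
        (fun j => hmem _ (List.get_mem _ _))
        (by rw [← List.sum_ofFn, List.ofFn_get, List.sum_append, hL3, hM3])
      rw [h0] at h2
      refine absurd h2 (not_lt.mpr (Finset.sum_nonneg fun j _ => ?_))
      rcases Q.root_pp hp _ (hmem _ (List.get_mem (L ++ M) j)).1.1 with h | h <;> rw [h]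
      norm_num
    · left
      exact himag α hα h1
  · rintro α (rfl | ⟨hα, hα0, hind⟩)
    · refine ⟨hδR, ?_⟩
      intro n β hn hβ hs
      rw [hppδ]
      have : ∑ j, Q.pp (β j) = 0 := by
        apply Finset.sum_eq_zero
        intro j _
        refine (Q.root_pp hp _ (hβ j).1.1).resolve_right fun h1 => ?_
        have hle := hge _ (hβ j) h1
        obtain ⟨k, hk⟩ : ∃ k : Fin n, k ≠ j := by
          have : Nontrivial (Fin n) := Fin.nontrivial_iff_two_le.mpr hn
          exact exists_ne j
        apply (hβ k).1.2.2
        funext i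
        have h2 := congrFun hs i
        rw [Finset.sum_apply, ← Finset.add_sum_erase _ _ (Finset.mem_univ j)] at h2
        have h3 := Finset.single_le_sum (s := Finset.univ.erase j) (f := fun c => β c i)
          (fun c _ => (hβ c).1.2.1 i) (Finset.mem_erase.mpr ⟨hk, Finset.mem_univ k⟩)
        have h4 := hle i
        have h5 := (hβ k).1.2.1 i
        simp only [Pi.zero_apply] at h3 ⊢
        omega
      rw [this]; norm_num
    · have hno : ∀ (a b : Q.I → ℤ) (L : List (Q.I → ℤ)),
          (∀ x ∈ a :: b :: L, x ∈ Q.Rplus K l) → (a :: b :: L).sum ≠ α := by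
        intro a b L hL hs
        apply hind
        have ha : a ∈ Q.Rplus K l := hL a (by simp)
        have hb : b ∈ Q.Rplus K l := hL b (by simp)
        refine ⟨a, (b :: L).sum, AddSubmonoid.subset_closure ha, ?_, ha.1.2.2, ?_, ?_⟩
        · exact AddSubmonoid.list_sum_mem _ fun x hx =>
            AddSubmonoid.subset_closure (hL x (List.mem_cons_of_mem _ hx))
        · exact Q.sum_ne_zero K l b L hb fun x hx => hL x (by simp [hx])
        · rw [← hs, List.sum_cons]
      refine ⟨?_, ?_⟩
      · obtain ⟨L, hL1, hL2, hL3⟩ := Q.NR_list K l α hα hα0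
        rcases L with _ | ⟨a, _ | ⟨b, L⟩⟩
        · simp at hL1
        · have : a = α := by simpa using hL3
          rw [← this]; exact hL2 a (by simp)
        · exact absurd hL3 (hno a b L hL2)
      · intro n β hn hβ hs
        exfalso
        obtain ⟨m, rfl⟩ : ∃ m, n = m + 2 := ⟨n - 2, by omega⟩
        refine hno (β 0) (β 1) (List.ofFn fun i : Fin m => β i.succ.succ) ?_ ?_
        · intro x hx
          simp only [List.mem_cons, List.mem_ofFn] at hx
          rcases hx with rfl | rfl | ⟨i, rfl⟩ <;> exact hβ _
        · rw [hs, Fin.sum_univ_succ, Fin.sum_univ_succ, List.sum_cons, List.sum_cons,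
            List.sum_ofFn]
          rfl
  · intro α hα
    rcases Q.root_pp hp α hα.1.1.1 with h0 | h1
    · by_contra hcon
      have h2 : Q.bil α α = 2 := by have := Q.two_pp α; omega
      have hr : Q.bil (α - δ) (α - δ) = 2 := by
        rw [FinQuiver.bil_sub_left, FinQuiver.bil_sub_right, Q.bil_radical hp δ hδδ,
          Q.bil_symm α δ, Q.bil_radical hp δ hδδ, h2]
        norm_num
      have hpos := (Q.sign_coh hc hp _ hr).resolve_right fun h =>
        hcon fun i => sub_nonpos.mp (h i)
      have h3 : α - δ ∈ Q.Rplus K l := by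
        refine ⟨⟨Q.real_root hc hp (∑ i, (α - δ) i).toNat _ (Int.self_le_toNat _) hpos hr,
          hpos, ?_⟩, by rw [Q.pair_sub, hα.1.2, hl, sub_zero]⟩
        intro h
        apply hcon
        intro i
        have := congrFun h i
        simp only [Pi.sub_apply, Pi.zero_apply] at this
        omega
      have h4 := htwo α hα δ (α - δ) hδR h3 (by abel)
      have h5 := Q.two_pp (α - δ)
      omega
    · intro i
      rw [himag α hα h1]

end
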